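/- Let η be a free ultrafilter on ℕ and t ∈ [0,1). Suppose that for every X ∈ η there exists an integer m ≥ 1 with X+m ∈ η. Then the density measure ν_{(η,t)} does not have the additive property. -/

import Mathlib

open Filter Topology

noncomputable section

/-- The density measure `ν_{(η,t)}(A) = η-lim_n |A ∩ [1,⌊2^t·2^n⌋]| / (2^t·2^n)`. -/
def nuDen (η : Ultrafilter ℕ) (t : ℝ) (A : Set ℕ) : ℝ :=
  limUnder (η : Filter ℕ)
    (fun n : ℕ =>
      (Nat.card (A ∩ Set.Icc 1 ⌊(2:ℝ) ^ t * 2 ^ n⌋₊ : Set ℕ) : ℝ) / ((2:ℝ) ^ t * 2 ^ n))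

/-- A set function `ν` on `𝒫(ℕ)` has the additive property if for every increasing
sequence `A₁ ⊆ A₂ ⊆ ⋯` there is `B ⊆ ℕ` with `ν(B) = lim_i ν(A_i)` and
`ν(A_i \ B) = 0` for all `i`. -/
def AddProp (ν : Set ℕ → ℝ) : Prop :=
  ∀ A : ℕ → Set ℕ, (∀ i, A i ⊆ A (i + 1)) →
    ∃ B : Set ℕ, Tendsto (fun i => ν (A i)) atTop (𝓝 (ν B)) ∧ ∀ i, ν (A i \ B) = 0

def NN (t : ℝ) (n : ℕ) : ℕ := ⌊(2:ℝ) ^ t * 2 ^ n⌋₊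

def ff (t : ℝ) (A : Set ℕ) (n : ℕ) : ℝ :=
  ((A ∩ Set.Icc 1 (NN t n)).ncard : ℝ) / ((2:ℝ) ^ t * 2 ^ n)

lemma sPos (t : ℝ) (n : ℕ) : 0 < (2:ℝ) ^ t * 2 ^ n := by positivity

lemma NN_le (t : ℝ) (n : ℕ) : (NN t n : ℝ) ≤ (2:ℝ) ^ t * 2 ^ n :=
  Nat.floor_le (sPos t n).le

lemma NN_lt (t : ℝ) (n : ℕ) : (2:ℝ) ^ t * 2 ^ n < NN t n + 1 := Nat.lt_floor_add_one _

lemma NN_mono (t : ℝ) : Monotone (NN t) := by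
  intro a b h
  apply Nat.floor_le_floor
  gcongr
  norm_num

lemma ncard_icc (a : ℕ) : (Set.Icc 1 a).ncard = a := by
  rw [← Finset.coe_Icc, Set.ncard_coe_finset]; simp

lemma ff_mem (t : ℝ) (A : Set ℕ) (n : ℕ) : ff t A n ∈ Set.Icc (0:ℝ) 1 := by
  constructor
  · unfold ff; positivity
  · unfold ff
    rw [div_le_one (sPos t n)]
    refine le_trans ?_ (NN_le t n)
    have := Set.ncard_le_ncard (s := A ∩ Set.Icc 1 (NN t n)) Set.inter_subset_right
      (Set.finite_Icc _ _)
    rw [ncard_icc] at this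
    exact_mod_cast this

lemma tend (η : Ultrafilter ℕ) (t : ℝ) (A : Set ℕ) :
    Tendsto (ff t A) η (𝓝 (nuDen η t A)) := by
  have h : nuDen η t A = limUnder (η : Filter ℕ) (ff t A) := rfl
  rw [h]
  apply tendsto_nhds_limUnder
  obtain ⟨x, -, hx⟩ := (isCompact_Icc (a := (0:ℝ)) (b := 1)).ultrafilter_le_nhds
    (η.map (ff t A)) (by
      rw [le_principal_iff]
      exact Filter.mem_map.2 (Filter.univ_mem' (ff_mem t A)))
  exact ⟨x, hx⟩

lemma residue (η : Ultrafilter ℕ) (M : ℕ) : ∃ r, ∀ᶠ n in (η : Filter ℕ), n % (M + 1) = r := by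
  have h : (Set.Iio (M + 1)) ∈ η.map (fun n => n % (M + 1)) := by
    rw [Ultrafilter.mem_map]
    exact Filter.univ_mem' (fun n => Nat.mod_lt _ (Nat.succ_pos M))
  obtain ⟨r, -, hr⟩ := Ultrafilter.eq_pure_of_finite_mem (Set.finite_Iio _) h
  refine ⟨r, ?_⟩
  have : ({r} : Set ℕ) ∈ η.map (fun n => n % (M + 1)) := by rw [hr]; simp
  rw [Ultrafilter.mem_map] at this
  filter_upwards [this] with n hn using hn

theorem stmt16 (η : Ultrafilter ℕ) (hη : (η : Filter ℕ) ≤ Filter.cofinite)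
    (t : ℝ) (ht : t ∈ Set.Ico (0:ℝ) 1)
    (hX : ∀ X ∈ η, ∃ m : ℕ, 1 ≤ m ∧ (fun x => x + m) '' X ∈ η) :
    ¬ AddProp (nuDen η t) := by
  intro hAP
  have large : ∀ k : ℕ, ∀ᶠ n in (η : Filter ℕ), k ≤ n := by
    intro k
    have : ∀ᶠ n in (atTop : Filter ℕ), k ≤ n := eventually_ge_atTop k
    rw [← Nat.cofinite_eq_atTop] at this
    exact hη this
  choose r hr using residue η
  let A : ℕ → Set ℕ := fun i => {k | ∃ l, 1 ≤ l ∧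
    (∃ m, 1 ≤ m ∧ m ≤ i ∧ (l + m) % (m + 1) = r m) ∧ NN t (l - 1) < k ∧ k ≤ NN t l}
  obtain ⟨B, hB, hBz⟩ := hAP A (by
    rintro i k ⟨l, h1, ⟨m, h2, h3, h4⟩, h5⟩
    exact ⟨l, h1, ⟨m, h2, by omega, h4⟩, h5⟩)
  have hA : ∀ i, nuDen η t (A i) ≤ 1 / 2 := by
    intro i
    refine le_of_tendsto (tend η t (A i)) ?_
    have hall : ∀ᶠ n in (η : Filter ℕ), ∀ m ∈ Set.Iic i, n % (m + 1) = r m :=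
      (Filter.eventually_all_finite (Set.finite_Iic i)).2 (fun m _ => hr m)
    filter_upwards [hall, large 1] with n hn hn1
    have hsub : A i ∩ Set.Icc 1 (NN t n) ⊆ Set.Icc 1 (NN t (n - 1)) := by
      rintro k ⟨⟨l, h1, ⟨m, h2, h3, h4⟩, h5, h6⟩, h7, h8⟩
      refine ⟨h7, ?_⟩
      by_contra hk
      push Not at hk
      have a1 : l - 1 < n := (NN_mono t).reflect_lt (h5.trans_le h8)
      have a2 : n - 1 < l := (NN_mono t).reflect_lt (hk.trans_le h6)
      have : l = n := by omega
      subst this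
      have h9 := hn m h3
      have : (l + m) ≡ l + 0 [MOD (m + 1)] := by
        show (l + m) % (m + 1) = l % (m + 1)
        rw [h4, h9]
      have := Nat.ModEq.add_left_cancel' _ this
      have h10 : m % (m + 1) = 0 % (m + 1) := this
      rw [Nat.mod_eq_of_lt (Nat.lt_succ_self m), Nat.zero_mod] at h10
      omega
    have hc := Set.ncard_le_ncard hsub (Set.finite_Icc _ _)
    rw [ncard_icc] at hc
    have hc' : ((A i ∩ Set.Icc 1 (NN t n)).ncard : ℝ) ≤ NN t (n - 1) := by exact_mod_cast hc
    have := NN_le t (n - 1)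
    obtain ⟨p, rfl⟩ : ∃ p, n = p + 1 := ⟨n - 1, by omega⟩
    simp only [Nat.add_sub_cancel] at this hc'
    unfold ff
    rw [div_le_iff₀ (sPos t _)]
    rw [pow_succ]
    linarith
  have hB1 : nuDen η t B ≤ 1 / 2 := le_of_tendsto' hB hA
  -- block estimate
  let Z : Set ℕ := {l | ((Set.Ioc (NN t (l - 1)) (NN t l) \ B).ncard : ℝ) ≤ 
    1 / 16 * ((2:ℝ) ^ t * 2 ^ l)}
  have hZm : ∀ m, 1 ≤ m → ∀ᶠ n in (η : Filter ℕ), n - m ∈ Z := by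
    intro m hm
    have h0 := tend η t (A m \ B)
    rw [hBz m] at h0
    have hε : (0:ℝ) < 1 / 16 / 2 ^ m := by positivity
    filter_upwards [h0.eventually_lt_const hε, hr m, large (m + 1)] with n h1 h2 h3
    obtain ⟨l, rfl⟩ : ∃ l, n = l + m := ⟨n - m, by omega⟩
    simp only [Nat.add_sub_cancel]
    have hsub : (Set.Ioc (NN t (l - 1)) (NN t l) \ B) ⊆
        (A m \ B) ∩ Set.Icc 1 (NN t (l + m)) := by
      rintro k ⟨⟨hk1, hk2⟩, hkB⟩
      exact ⟨⟨⟨l, by omega, ⟨m, hm, le_rfl, h2⟩, hk1, hk2⟩, hkB⟩, by omega,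
        hk2.trans (NN_mono t (by omega))⟩
    have hc := Set.ncard_le_ncard hsub ((Set.finite_Icc _ _).inter_of_right _)
    have hc' : ((Set.Ioc (NN t (l - 1)) (NN t l) \ B).ncard : ℝ) ≤
      (((A m \ B) ∩ Set.Icc 1 (NN t (l + m))).ncard : ℝ) := by exact_mod_cast hc
    unfold ff at h1
    rw [div_lt_iff₀ (sPos t _)] at h1
    refine hc'.trans (h1.le.trans (le_of_eq ?_))
    rw [pow_add]
    field_simp
  have hZ : Z ∈ η := by
    by_contra hn
    obtain ⟨m, hm, hmem⟩ := hX Zᶜ (Ultrafilter.compl_mem_iff_notMem.2 hn)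
    have hb : ∀ᶠ n in (η : Filter ℕ), False := by
      filter_upwards [hmem, hZm m hm] with n h1 h2
      obtain ⟨z, hz, rfl⟩ := h1
      simp only [Nat.add_sub_cancel] at h2
      exact hz h2
    exact hb.exists.choose_spec
  have hB2 : (9:ℝ) / 16 ≤ nuDen η t B := by
    refine ge_of_tendsto (tend η t B) ?_
    filter_upwards [hZ, hZm 1 le_rfl, large 4] with n h1 h2 h3
    obtain ⟨p, rfl⟩ : ∃ p, n = p + 2 := ⟨n - 2, by omega⟩
    have e1 : p + 2 - 1 = p + 1 := by omega
    rw [e1] at h2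
    simp only [Z, Set.mem_setOf_eq, e1, Nat.add_sub_cancel] at h1 h2
    have hsub : Set.Icc 1 (NN t (p + 2)) ⊆ (B ∩ Set.Icc 1 (NN t (p + 2))) ∪
        (Set.Icc 1 (NN t p) ∪ ((Set.Ioc (NN t p) (NN t (p + 1)) \ B) ∪
          (Set.Ioc (NN t (p + 1)) (NN t (p + 2)) \ B))) := by
      rintro k ⟨hk1, hk2⟩
      by_cases hkB : k ∈ B
      · exact Or.inl ⟨hkB, hk1, hk2⟩
      · right
        by_cases hp : k ≤ NN t p
        · exact Or.inl ⟨hk1, hp⟩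
        right
        by_cases hp' : k ≤ NN t (p + 1)
        · exact Or.inl ⟨⟨by omega, hp'⟩, hkB⟩
        · exact Or.inr ⟨⟨by omega, hk2⟩, hkB⟩
    have hc := Set.ncard_le_ncard hsub
      (((Set.finite_Icc _ _).inter_of_right _).union ((Set.finite_Icc _ _).union
        (((Set.finite_Ioc _ _).diff).union ((Set.finite_Ioc _ _).diff))))
    have u1 := Set.ncard_union_le (B ∩ Set.Icc 1 (NN t (p + 2)))
        (Set.Icc 1 (NN t p) ∪ ((Set.Ioc (NN t p) (NN t (p + 1)) \ B) ∪
          (Set.Ioc (NN t (p + 1)) (NN t (p + 2)) \ B)))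
    have u2 := Set.ncard_union_le (Set.Icc 1 (NN t p)) ((Set.Ioc (NN t p) (NN t (p + 1)) \ B) ∪
          (Set.Ioc (NN t (p + 1)) (NN t (p + 2)) \ B))
    have u3 := Set.ncard_union_le (Set.Ioc (NN t p) (NN t (p + 1)) \ B)
          (Set.Ioc (NN t (p + 1)) (NN t (p + 2)) \ B)
    rw [ncard_icc] at hc u2
    have hc' : NN t (p + 2) ≤ (B ∩ Set.Icc 1 (NN t (p + 2))).ncard + (NN t p +
      ((Set.Ioc (NN t p) (NN t (p + 1)) \ B).ncard +
        (Set.Ioc (NN t (p + 1)) (NN t (p + 2)) \ B).ncard)) := by omega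
    have hc2 : (NN t (p + 2) : ℝ) ≤ (B ∩ Set.Icc 1 (NN t (p + 2))).ncard + (NN t p +
      ((Set.Ioc (NN t p) (NN t (p + 1)) \ B).ncard +
        (Set.Ioc (NN t (p + 1)) (NN t (p + 2)) \ B).ncard)) := by exact_mod_cast hc'
    have v1 := NN_lt t (p + 2)
    have v2 := NN_le t p
    have v3 : (1:ℝ) ≤ 2 ^ t := Real.one_le_rpow (by norm_num) ht.1
    have v4 : (4:ℝ) ≤ 2 ^ p := by
      calc (4:ℝ) = 2 ^ 2 := by norm_num
        _ ≤ 2 ^ p := pow_le_pow_right₀ (by norm_num) (by omega)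
    have v5 : (4:ℝ) ≤ 2 ^ t * 2 ^ p := by nlinarith
    unfold ff
    rw [le_div_iff₀ (sPos t _)]
    have w1 : (2:ℝ) ^ t * 2 ^ (p + 1) = 2 * (2 ^ t * 2 ^ p) := by ring
    have w2 : (2:ℝ) ^ t * 2 ^ (p + 2) = 4 * (2 ^ t * 2 ^ p) := by ring
    rw [w1] at h2
    rw [w2] at h1 v1 ⊢
    linarith
  linarith
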